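/- arXiv:2302.12300 — 2 statements merged into one kernel-verified Lean document; each statement's English description precedes it below -/
import Mathlib

section
/- Let (X, M) be a measurable space, μ₁ a positive measure on (X, M), μ₂ a positive Borel measure on ℝ, and μ₃ a positive measure on (X, M) such that ψ·μ₁ ≤ μ₃ for some M-measurable density ψ : X → [0,∞). Let N : X → ℝ be M-measurable and let 1 < p ≤ q < ∞, with p' = p/(p−1) and q' = q/(q−1). If B' := sup_{r∈ℝ} μ₂([r,+∞))^{1/q} (∫_{{x : N(x)≤r}} ψ(x)^{−p'/p} dμ₁(x))^{1/p'} is finite, then for every M-measurable function f : X → [0,+∞], (∫_ℝ (∫_{{x : N(x)≤r}} f(x) dμ₁(x))^q dμ₂(r))^{1/q} ≤ min((p')^{1/p'} p^{1/q}, (q')^{1/p'} q^{1/q}) · B' · (∫_X f(x)^p dμ₃(x))^{1/p}. -/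
open MeasureTheory ENNReal
open scoped NNReal

open Set Function

/-!
Substituting `g = f ψ ^ (p' / p)` and `dν = ψ ^ (-p' / p) dμ₁` reduces the inequality to one for
the operator `g ↦ ∫ x in {N ≤ r}, g x ∂ν` between `L^p(ν)` and `L^q(μ₂)`. Put
`V x = ν {N ≤ N x}`, `U r = μ₂ [r, ∞)` and fix `s ∈ (0, 1)`.

Hölder's inequality with the weight `V ^ (s / p')` bounds the inner integral by
`(∫ x in {N ≤ r}, g ^ p V ^ (s p / p') ∂ν) ^ (1 / p)` times a power of
`∫ x in {N ≤ r}, V ^ (-s) ∂ν ≤ (1 - s)⁻¹ ν {N ≤ r} ^ (1 - s)`; the last bound holds, atoms or not,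
because `ν {V ≤ c} ≤ c`. The hypothesis on `B'` trades `ν {N ≤ r}` for a negative power of `U r`.
Minkowski's integral inequality with exponent `q / p` then moves the integral in `r` inside, where
`∫ r in [N x, ∞), U ^ (-(1 - s)) ∂μ₂ ≤ s⁻¹ U (N x) ^ s`, and the hypothesis on `B'` cancels
`U (N x) ^ s` against `V x ^ s`. The two constants are the cases `s = 1 / p` and `s = 1 / q`.
-/

section Distribution

variable {X α : Type*} [MeasurableSpace X] [LinearOrder α]

lemma monotone_measure_sublevel (ν : Measure X) (N : X → α) :
    Monotone fun t ↦ ν {y | N y ≤ t} :=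
  fun _ _ hst ↦ measure_mono fun _ hy ↦ le_trans hy hst

lemma monotone_setLIntegral_sublevel (ν : Measure X) (N : X → α) (g : X → ℝ≥0∞) :
    Monotone fun t ↦ ∫⁻ y in {y | N y ≤ t}, g y ∂ν :=
  fun _ _ hst ↦ lintegral_mono_set fun _ hy ↦ le_trans hy hst

lemma antitone_measure_Ici [MeasurableSpace α] (μ : Measure α) : Antitone fun t ↦ μ (Ici t) :=
  fun _ _ hst ↦ measure_mono (Ici_subset_Ici.2 hst)

lemma isUpperSet_measure_sublevel_ne_zero (ν : Measure X) (N : X → α) :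
    IsUpperSet {t | ν {y | N y ≤ t} ≠ 0} := fun _ _ hst hs ↦
  (hs.bot_lt.trans_le (monotone_measure_sublevel ν N hst)).ne'

lemma isLowerSet_measure_Ici_ne_zero [MeasurableSpace α] (μ : Measure α) :
    IsLowerSet {t | μ (Ici t) ≠ 0} := fun _ _ hst hs ↦
  (hs.bot_lt.trans_le (antitone_measure_Ici μ hst)).ne'

variable [TopologicalSpace α] [OrderTopology α] [SecondCountableTopology α]

lemma exists_countable_biUnion_Iic_eq {D : Set α} (hD : IsLowerSet D) :
    ∃ T ⊆ D, T.Countable ∧ ⋃ t ∈ T, Iic t = D := by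
  have biUnion_Iic_subset {T : Set α} (hTD : T ⊆ D) : ⋃ t ∈ T, Iic t ⊆ D :=
    iUnion₂_subset fun t ht ↦ hD.Iic_subset (hTD ht)
  by_cases hmax : ∃ m, IsGreatest D m
  · obtain ⟨m, hmD, hm⟩ := hmax
    exact ⟨{m}, by simpa using hmD, countable_singleton m,
      (biUnion_Iic_subset (by simpa using hmD)).antisymm fun x hx ↦ by simpa using hm hx⟩
  · obtain ⟨T, hTD, hTc, hT⟩ :=
      TopologicalSpace.isOpen_biUnion_countable D Iio fun _ _ ↦ isOpen_Iio
    refine ⟨T, hTD, hTc, (biUnion_Iic_subset hTD).antisymm fun x hx ↦ ?_⟩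
    obtain ⟨d, hd, hxd⟩ : ∃ d ∈ D, x < d := by
      by_contra! h
      exact hmax ⟨x, hx, h⟩
    have hxT : x ∈ ⋃ t ∈ T, Iio t := hT ▸ mem_biUnion hd hxd
    exact iUnion₂_mono (fun _ _ ↦ Iio_subset_Iic_self) hxT

lemma measure_setOf_measure_sublevel_le_le (ν : Measure X) (N : X → α) (c : ℝ≥0∞) :
    ν {x | ν {y | N y ≤ N x} ≤ c} ≤ c := by
  have hlower : IsLowerSet {t | ν {y | N y ≤ t} ≤ c} :=
    fun _ _ hts ht ↦ (monotone_measure_sublevel ν N hts).trans ht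
  obtain ⟨T, hTc, hcount, hT⟩ := exists_countable_biUnion_Iic_eq hlower
  have hunion : {x | ν {y | N y ≤ N x} ≤ c} = ⋃ t ∈ T, {y | N y ≤ t} := by
    change N ⁻¹' {t | ν {y | N y ≤ t} ≤ c} = ⋃ t ∈ T, N ⁻¹' Iic t
    rw [← hT, preimage_iUnion₂]
  have hmono : Monotone fun t : α ↦ {y | N y ≤ t} := fun _ _ hst _ hy ↦ le_trans hy hst
  rw [hunion, measure_biUnion_eq_iSup hcount fun s hs t ht ↦ ?_]
  · exact iSup₂_le hTc
  · rcases le_total s t with hst | hts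
    · exact ⟨t, ht, hmono hst, le_rfl⟩
    · exact ⟨s, hs, le_rfl, hmono hts⟩

lemma ae_measure_sublevel_ne_zero (ν : Measure X) (N : X → α) :
    ∀ᵐ x ∂ν, ν {y | N y ≤ N x} ≠ 0 := by
  simpa [ae_iff] using measure_setOf_measure_sublevel_le_le ν N 0

lemma ae_measure_Ici_ne_zero [MeasurableSpace α] (μ : Measure α) : ∀ᵐ r ∂μ, μ (Ici r) ≠ 0 :=
  ae_measure_sublevel_ne_zero μ OrderDual.toDual

lemma sigmaFinite_restrict_preimage {ν : Measure X} {N : X → α} {D : Set α} (hD : IsLowerSet D)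
    (hND : MeasurableSet (N ⁻¹' D)) (hfin : ∀ t ∈ D, ν {y | N y ≤ t} ≠ ⊤) :
    SigmaFinite (ν.restrict (N ⁻¹' D)) := by
  obtain ⟨T, hTD, hTc, hT⟩ := exists_countable_biUnion_Iic_eq hD
  refine Measure.sigmaFinite_of_countable
    (S := insert (N ⁻¹' D)ᶜ ((fun t ↦ N ⁻¹' Iic t) '' T)) ((hTc.image _).insert _) ?_ ?_
  · rintro _ (rfl | ⟨t, ht, rfl⟩)
    · simp [Measure.restrict_apply' hND]
    · exact (Measure.restrict_apply_le _ _).trans_lt (hfin t (hTD ht)).lt_top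
  · rw [sUnion_insert, sUnion_image, ← preimage_iUnion₂, hT, compl_union_self]

end Distribution

section RpowNeg

lemma ofReal_toReal_rpow_neg {s : ℝ} (hs : 0 ≤ s) {t : ℝ≥0∞} (ht : t ≠ 0) :
    ENNReal.ofReal (t.toReal ^ (-s)) = t ^ (-s) := by
  rw [ENNReal.toReal_rpow, ENNReal.ofReal_toReal]
  simp [ENNReal.rpow_eq_top_iff, ht, hs]

lemma lt_toReal_rpow_neg_iff {s l : ℝ} (hs : 0 < s) (hl : 0 ≤ l) {t : ℝ≥0∞} (ht : t ≠ 0) :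
    l < t.toReal ^ (-s) ↔ t < (ENNReal.ofReal l)⁻¹ ^ s⁻¹ := by
  rw [← ENNReal.ofReal_lt_ofReal_iff_of_nonneg hl, ofReal_toReal_rpow_neg hs.le ht,
    ENNReal.rpow_neg, ENNReal.lt_inv_iff_lt_inv, ENNReal.lt_rpow_inv_iff hs]

lemma lintegral_Ioc_ofReal_rpow {u M : ℝ} (hu : -1 < u) (hM : 0 ≤ M) :
    ∫⁻ v in Ioc 0 M, ENNReal.ofReal (v ^ u) = ENNReal.ofReal (M ^ (u + 1) / (u + 1)) := by
  have hint : IntegrableOn (fun v : ℝ ↦ v ^ u) (Ioc 0 M) :=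
    (intervalIntegrable_iff_integrableOn_Ioc_of_le hM).1
      (intervalIntegral.intervalIntegrable_rpow' hu)
  rw [← ofReal_integral_eq_lintegral_ofReal hint (ae_restrict_of_forall_mem measurableSet_Ioc
      fun v hv ↦ Real.rpow_nonneg hv.1.le _),
    ← intervalIntegral.integral_of_le hM, integral_rpow (Or.inl hu),
    Real.zero_rpow (by linarith), sub_zero]

variable {X : Type*} [MeasurableSpace X] {ν : Measure X}

lemma measure_lt_toReal_rpow_neg_le_volume {τ : X → ℝ≥0∞} (hle : ∀ c, ν {x | τ x ≤ c} ≤ c)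
    (hfin : ν univ ≠ ⊤) {s l : ℝ} (hs : 0 < s) (hl : 0 < l) :
    ν {x | l < (τ x).toReal ^ (-s)} ≤
      volume.restrict (Ioc 0 (ν univ).toReal) {v | l < v ^ (-s)} := by
  set c := (ENNReal.ofReal l)⁻¹ ^ s⁻¹
  have hc : c ≠ ⊤ := ENNReal.rpow_ne_top_of_nonneg (by positivity) (by simpa using hl)
  have hpos : ∀ᵐ x ∂ν, τ x ≠ 0 := by simpa [ae_iff] using hle 0
  calc ν {x | l < (τ x).toReal ^ (-s)}
      ≤ ν {x | τ x ≤ c} := measure_mono_ae <| hpos.mono fun x hx hlx ↦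
        ((lt_toReal_rpow_neg_iff hs hl.le hx).1 hlx).le
    _ ≤ min c (ν univ) := le_min (hle c) (measure_mono (subset_univ _))
    _ = volume (Ioo 0 (min c.toReal (ν univ).toReal)) := by
        rw [Real.volume_Ioo, sub_zero, ENNReal.ofReal_min, ENNReal.ofReal_toReal hc,
          ENNReal.ofReal_toReal hfin]
    _ ≤ volume.restrict (Ioc 0 (ν univ).toReal) {v | l < v ^ (-s)} := by
        rw [Measure.restrict_apply' measurableSet_Ioc]
        refine measure_mono fun v ⟨hv0, hv⟩ ↦ ⟨?_, hv0, hv.le.trans (min_le_right _ _)⟩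
        have hvc : ENNReal.ofReal v < c :=
          (ENNReal.ofReal_lt_iff_lt_toReal hv0.le hc).2 (hv.trans_le (min_le_left _ _))
        simpa [hv0.le] using
          (lt_toReal_rpow_neg_iff hs hl.le (ENNReal.ofReal_pos.2 hv0).ne').2 hvc

/- The hypothesis says that `τ` is stochastically larger than the identity on `(0, ν univ)`
under Lebesgue measure, so the integral of the decreasing function `t ↦ t ^ (-s)` only increases. -/
lemma lintegral_rpow_neg_le_of_measure_le {τ : X → ℝ≥0∞} (hτ : Measurable τ)
    (hle : ∀ c, ν {x | τ x ≤ c} ≤ c) {s : ℝ} (hs : 0 < s) (hs1 : s < 1) :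
    ∫⁻ x, τ x ^ (-s) ∂ν ≤ ENNReal.ofReal (1 - s)⁻¹ * ν univ ^ (1 - s) := by
  rcases eq_or_ne (ν univ) ⊤ with htop | hfin
  · simp [htop, hs1]
  have hpos : ∀ᵐ x ∂ν, τ x ≠ 0 := by simpa [ae_iff] using hle 0
  set M := (ν univ).toReal
  calc ∫⁻ x, τ x ^ (-s) ∂ν
      = ∫⁻ x, ENNReal.ofReal ((τ x).toReal ^ (-s)) ∂ν :=
        lintegral_congr_ae <| hpos.mono fun x hx ↦ (ofReal_toReal_rpow_neg hs.le hx).symm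
    _ = ∫⁻ l in Ioi 0, ν {x | l < (τ x).toReal ^ (-s)} :=
        lintegral_eq_lintegral_meas_lt ν (.of_forall fun _ ↦ by positivity) (by fun_prop)
    _ ≤ ∫⁻ l in Ioi 0, volume.restrict (Ioc 0 M) {v | l < v ^ (-s)} :=
        setLIntegral_mono' measurableSet_Ioi fun _ hl ↦
          measure_lt_toReal_rpow_neg_le_volume hle hfin hs hl
    _ = ∫⁻ v in Ioc 0 M, ENNReal.ofReal (v ^ (-s)) :=
        (lintegral_eq_lintegral_meas_lt _ (ae_restrict_of_forall_mem measurableSet_Ioc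
          fun v hv ↦ Real.rpow_nonneg hv.1.le _) (by fun_prop)).symm
    _ = ENNReal.ofReal (1 - s)⁻¹ * ν univ ^ (1 - s) := by
        rw [lintegral_Ioc_ofReal_rpow (by linarith) toReal_nonneg, neg_add_eq_sub,
          div_eq_mul_inv, ENNReal.ofReal_mul' (by simpa using hs1.le), mul_comm,
          ← ENNReal.ofReal_rpow_of_nonneg toReal_nonneg (by linarith),
          ENNReal.ofReal_toReal hfin]

variable {α : Type*} [LinearOrder α] [TopologicalSpace α] [OrderTopology α]
  [SecondCountableTopology α] [MeasurableSpace α] [BorelSpace α]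

lemma setLIntegral_measure_sublevel_rpow_neg_le (ν : Measure X) {N : X → α} (hN : Measurable N)
    {s : ℝ} (hs : 0 < s) (hs1 : s < 1) (r : α) :
    ∫⁻ x in {x | N x ≤ r}, ν {y | N y ≤ N x} ^ (-s) ∂ν ≤
      ENNReal.ofReal (1 - s)⁻¹ * ν {x | N x ≤ r} ^ (1 - s) := by
  have hmeas : MeasurableSet {x | N x ≤ r} := measurableSet_le hN measurable_const
  set ν' := ν.restrict {x | N x ≤ r}
  calc ∫⁻ x, ν {y | N y ≤ N x} ^ (-s) ∂ν'
      = ∫⁻ x, ν' {y | N y ≤ N x} ^ (-s) ∂ν' := by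
        refine setLIntegral_congr_fun hmeas fun x hx ↦ ?_
        have hsub : {y | N y ≤ N x} ⊆ {y | N y ≤ r} := fun y hy ↦ le_trans hy hx
        simp only [ν', Measure.restrict_eq_self ν hsub]
    _ ≤ ENNReal.ofReal (1 - s)⁻¹ * ν' univ ^ (1 - s) :=
        lintegral_rpow_neg_le_of_measure_le
          ((monotone_measure_sublevel ν' N).measurable.comp hN)
          (measure_setOf_measure_sublevel_le_le ν' N) hs hs1
    _ = _ := by rw [Measure.restrict_apply_univ]

lemma setLIntegral_measure_Ici_rpow_neg_le (μ : Measure α) {s : ℝ} (hs : 0 < s) (hs1 : s < 1)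
    (t : α) :
    ∫⁻ r in Ici t, μ (Ici r) ^ (-s) ∂μ ≤ ENNReal.ofReal (1 - s)⁻¹ * μ (Ici t) ^ (1 - s) :=
  setLIntegral_measure_sublevel_rpow_neg_le (N := OrderDual.toDual) μ measurable_id hs hs1 _

end RpowNeg

section Minkowski

variable {X Y : Type*} [MeasurableSpace X] [MeasurableSpace Y] {ν : Measure X} {μ : Measure Y}
  {f : X → Y → ℝ≥0∞} {a : ℝ}

lemma lintegral_rpow_mul_lintegral_le [SFinite ν] [SFinite μ] (hf : Measurable (uncurry f))
    (ha : 1 ≤ a) {h : Y → ℝ≥0∞} (hh : Measurable h) :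
    ∫⁻ y, h y ^ (1 - 1 / a) * ∫⁻ x, f x y ∂ν ∂μ ≤
      (∫⁻ y, h y ∂μ) ^ (1 - 1 / a) * ∫⁻ x, (∫⁻ y, f x y ^ a ∂μ) ^ (1 / a) ∂ν := by
  have ha0 : 0 < a := by linarith
  have hf_right (x : X) : Measurable (f x) := hf.comp measurable_prodMk_left
  have hf_left (y : Y) : Measurable (f · y) := hf.comp measurable_prodMk_right
  have holder (x : X) : ∫⁻ y, h y ^ (1 - 1 / a) * f x y ∂μ ≤
      (∫⁻ y, h y ∂μ) ^ (1 - 1 / a) * (∫⁻ y, f x y ^ a ∂μ) ^ (1 / a) := by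
    simpa [← ENNReal.rpow_mul, ha0.ne'] using ENNReal.lintegral_mul_norm_pow_le (μ := μ)
      hh.aemeasurable ((hf_right x).pow_const a).aemeasurable (p := 1 - 1 / a) (q := 1 / a)
      (by simpa using inv_le_one_of_one_le₀ ha) (by positivity) (by ring)
  calc ∫⁻ y, h y ^ (1 - 1 / a) * ∫⁻ x, f x y ∂ν ∂μ
      = ∫⁻ y, ∫⁻ x, h y ^ (1 - 1 / a) * f x y ∂ν ∂μ :=
        lintegral_congr fun y ↦ (lintegral_const_mul _ (hf_left y)).symm
    _ = ∫⁻ x, ∫⁻ y, h y ^ (1 - 1 / a) * f x y ∂μ ∂ν :=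
        lintegral_lintegral_swap <| Measurable.aemeasurable <|
          ((hh.comp measurable_fst).pow_const _).mul (hf.comp measurable_swap)
    _ ≤ ∫⁻ x, (∫⁻ y, h y ∂μ) ^ (1 - 1 / a) * (∫⁻ y, f x y ^ a ∂μ) ^ (1 / a) ∂ν :=
        lintegral_mono holder
    _ = _ := lintegral_const_mul _ ((hf.pow_const a).lintegral_prod_right'.pow_const _)

lemma lintegral_rpow_le_lintegral_of_le_rpow_lintegral [SFinite ν] [SFinite μ]
    (hf : Measurable (uncurry f)) (ha : 1 ≤ a) {h : Y → ℝ≥0∞} (hh : Measurable h)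
    (hhf : ∀ y, h y ≤ (∫⁻ x, f x y ∂ν) ^ a) (hfin : ∫⁻ y, h y ∂μ ≠ ⊤) :
    (∫⁻ y, h y ∂μ) ^ (1 / a) ≤ ∫⁻ x, (∫⁻ y, f x y ^ a ∂μ) ^ (1 / a) ∂ν := by
  have ha0 : 0 < a := by linarith
  have hexp : 0 ≤ 1 - 1 / a := by simpa using inv_le_one_of_one_le₀ ha
  rcases eq_or_ne (∫⁻ y, h y ∂μ) 0 with hzero | hpos
  · simp [hzero, ha0]
  have hroot (y : Y) : h y ^ (1 / a) ≤ ∫⁻ x, f x y ∂ν := by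
    simpa [ENNReal.rpow_inv_le_iff ha0] using hhf y
  have hsplit (t : ℝ≥0∞) : t ^ (1 - 1 / a) * t ^ (1 / a) = t := by
    rw [← ENNReal.rpow_add_of_nonneg _ _ hexp (by positivity), sub_add_cancel, ENNReal.rpow_one]
  rw [← ENNReal.mul_le_mul_iff_right (ENNReal.rpow_pos hpos.bot_lt hfin).ne'
    (ENNReal.rpow_ne_top_of_nonneg hexp hfin), hsplit]
  calc ∫⁻ y, h y ∂μ
      = ∫⁻ y, h y ^ (1 - 1 / a) * h y ^ (1 / a) ∂μ := by simp only [hsplit]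
    _ ≤ ∫⁻ y, h y ^ (1 - 1 / a) * ∫⁻ x, f x y ∂ν ∂μ :=
        lintegral_mono fun y ↦ mul_le_mul_right (hroot y) _
    _ ≤ _ := lintegral_rpow_mul_lintegral_le hf ha hh

lemma iSup_min_natCast (t : ℝ≥0∞) : ⨆ n : ℕ, min t n = t := by
  rw [← inf_iSup_eq, ENNReal.iSup_natCast, inf_top_eq]

lemma lintegral_rpow_lintegral_le_of_isFiniteMeasure [SFinite ν] [IsFiniteMeasure μ]
    (hf : Measurable (uncurry f)) (ha : 1 ≤ a) :
    (∫⁻ y, (∫⁻ x, f x y ∂ν) ^ a ∂μ) ^ (1 / a) ≤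
      ∫⁻ x, (∫⁻ y, f x y ^ a ∂μ) ^ (1 / a) ∂ν := by
  have ha0 : 0 < a := by linarith
  have hF : Measurable fun y ↦ (∫⁻ x, f x y ∂ν) ^ a := hf.lintegral_prod_left.pow_const a
  have htrunc : ∫⁻ y, (∫⁻ x, f x y ∂ν) ^ a ∂μ =
      ⨆ n : ℕ, ∫⁻ y, min ((∫⁻ x, f x y ∂ν) ^ a) n ∂μ := by
    rw [← lintegral_iSup (fun n ↦ hF.min measurable_const)
      fun m n hmn y ↦ min_le_min_left _ (by exact_mod_cast hmn)]
    simp only [iSup_min_natCast]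
  rw [one_div, ENNReal.rpow_inv_le_iff ha0, htrunc]
  refine iSup_le fun n ↦ ?_
  rw [← ENNReal.rpow_inv_le_iff ha0, ← one_div]
  refine lintegral_rpow_le_lintegral_of_le_rpow_lintegral hf ha (hF.min measurable_const)
    (fun y ↦ min_le_left _ _) (ne_top_of_le_ne_top ?_ (lintegral_mono fun y ↦ min_le_right _ _))
  simpa using ENNReal.mul_ne_top (ENNReal.natCast_ne_top n) (measure_ne_top μ univ)

lemma lintegral_eq_iSup_lintegral_sum_sfiniteSeq (μ : Measure Y) [SFinite μ] (g : Y → ℝ≥0∞) :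
    ∫⁻ y, g y ∂μ = ⨆ S : Finset ℕ, ∫⁻ y, g y ∂(∑ n ∈ S, sfiniteSeq μ n) := by
  conv_lhs => rw [← sum_sfiniteSeq μ]
  simp only [lintegral_sum_measure, ENNReal.tsum_eq_iSup_sum, lintegral_finsetSum_measure]

theorem lintegral_rpow_lintegral_le [SFinite ν] [SFinite μ]
    (hf : Measurable (uncurry f)) (ha : 1 ≤ a) :
    (∫⁻ y, (∫⁻ x, f x y ∂ν) ^ a ∂μ) ^ (1 / a) ≤
      ∫⁻ x, (∫⁻ y, f x y ^ a ∂μ) ^ (1 / a) ∂ν := by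
  have ha0 : 0 < a := by linarith
  rw [one_div, ENNReal.rpow_inv_le_iff ha0, lintegral_eq_iSup_lintegral_sum_sfiniteSeq μ]
  refine iSup_le fun S ↦ ?_
  have hle : ∑ n ∈ S, sfiniteSeq μ n ≤ μ := by
    conv_rhs => rw [← sum_sfiniteSeq μ]
    exact Measure.le_iff.2 fun A hA ↦ by
      simpa [Measure.sum_apply _ hA] using ENNReal.sum_le_tsum S
  rw [← ENNReal.rpow_inv_le_iff ha0, ← one_div]
  refine (lintegral_rpow_lintegral_le_of_isFiniteMeasure hf ha).trans ?_
  gcongr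

variable {α : Type*} [LinearOrder α] [TopologicalSpace α] [OrderTopology α]
  [SecondCountableTopology α] [MeasurableSpace α] [BorelSpace α]

lemma lintegral_rpow_setLIntegral_sublevel_le (ν : Measure X) [SFinite ν] (m : Measure α)
    [SFinite m] {N : X → α} (hN : Measurable N) {g : X → ℝ≥0∞} (hg : Measurable g) (ha : 1 ≤ a) :
    (∫⁻ r, (∫⁻ x in {x | N x ≤ r}, g x ∂ν) ^ a ∂m) ^ (1 / a) ≤
      ∫⁻ x, g x * m (Ici (N x)) ^ (1 / a) ∂ν := by
  have ha0 : 0 < a := by linarith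
  let k : X → α → ℝ≥0∞ := fun x r ↦ {z : X × α | N z.1 ≤ z.2}.indicator (g ·.1) (x, r)
  have hk : Measurable (uncurry k) := (hg.comp measurable_fst).indicator
    (measurableSet_le (hN.comp measurable_fst) measurable_snd)
  have hint (r : α) : ∫⁻ x in {x | N x ≤ r}, g x ∂ν = ∫⁻ x, k x r ∂ν :=
    (lintegral_indicator (measurableSet_le hN measurable_const) g).symm
  have hnorm (x : X) : (∫⁻ r, k x r ^ a ∂m) ^ (1 / a) = g x * m (Ici (N x)) ^ (1 / a) := by
    have hpow (r : α) : k x r ^ a = (Ici (N x)).indicator (fun _ ↦ g x ^ a) r := by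
      by_cases hr : N x ≤ r <;> simp [k, indicator, hr, ha0]
    rw [lintegral_congr hpow, lintegral_indicator_const measurableSet_Ici,
      ENNReal.mul_rpow_of_nonneg _ _ (by positivity), ← ENNReal.rpow_mul,
      mul_one_div_cancel ha0.ne', ENNReal.rpow_one]
  simpa only [hint, hnorm] using
    lintegral_rpow_lintegral_le (ν := ν) (μ := m) hk ha

end Minkowski

section Hardy

variable {X α : Type*} [MeasurableSpace X] [LinearOrder α] [MeasurableSpace α]

/-- Muckenhoupt's condition with constant `B` for the Hardy operator
`g ↦ (r ↦ ∫ x in {N ≤ r}, g x ∂ν)` from `L^p(ν)` to `L^q(μ)`, where `p'` is the conjugate exponent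
of `p`. -/
def IsMuckenhouptBound (ν : Measure X) (μ : Measure α) (N : X → α) (p' q : ℝ) (B : ℝ≥0∞) : Prop :=
  ∀ r, μ (Ici r) ^ (1 / q) * ν {x | N x ≤ r} ^ (1 / p') ≤ B

namespace IsMuckenhouptBound

variable {ν : Measure X} {μ : Measure α} {N : X → α} {p' q s : ℝ} {B : ℝ≥0∞}

lemma restrict (h : IsMuckenhouptBound ν μ N p' q B) (hp' : 0 < p') (hq : 0 < q) (S : Set X)
    (T : Set α) : IsMuckenhouptBound (ν.restrict S) (μ.restrict T) N p' q B := fun r ↦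
  le_trans (by gcongr <;> exact Measure.restrict_le_self) (h r)

lemma measure_sublevel_ne_top (h : IsMuckenhouptBound ν μ N p' q B) (hp' : 0 < p') (hq : 0 < q)
    (hB : B ≠ ⊤) {r : α} (hr : μ (Ici r) ≠ 0) : ν {x | N x ≤ r} ≠ ⊤ := by
  intro htop
  have hr_root : μ (Ici r) ^ (1 / q) ≠ 0 := by simp [ENNReal.rpow_eq_zero_iff, hr, hq.le]
  have hle := h r
  rw [htop, ENNReal.top_rpow_of_pos (by positivity), ENNReal.mul_top hr_root] at hle
  exact hB (top_le_iff.1 hle)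

lemma measure_Ici_ne_top (h : IsMuckenhouptBound ν μ N p' q B) (hp' : 0 < p') (hq : 0 < q)
    (hB : B ≠ ⊤) {r : α} (hr : ν {x | N x ≤ r} ≠ 0) : μ (Ici r) ≠ ⊤ := by
  intro htop
  have hr_root : ν {x | N x ≤ r} ^ (1 / p') ≠ 0 := by simp [ENNReal.rpow_eq_zero_iff, hr, hp'.le]
  have hle := h r
  rw [htop, ENNReal.top_rpow_of_pos (by positivity), ENNReal.top_mul hr_root] at hle
  exact hB (top_le_iff.1 hle)

lemma rpow_mul_rpow_le (h : IsMuckenhouptBound ν μ N p' q B) (hs : 0 ≤ s) (r : α) :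
    μ (Ici r) ^ (s / q) * ν {x | N x ≤ r} ^ (s / p') ≤ B ^ s := by
  have hpow := ENNReal.rpow_le_rpow (h r) hs
  rwa [ENNReal.mul_rpow_of_nonneg _ _ hs, ← ENNReal.rpow_mul, ← ENNReal.rpow_mul,
    one_div_mul_eq_div, one_div_mul_eq_div] at hpow

lemma rpow_measure_sublevel_le (h : IsMuckenhouptBound ν μ N p' q B) (hs : 0 ≤ s) {r : α}
    (hr : μ (Ici r) ≠ 0) (hr' : μ (Ici r) ≠ ⊤) :
    ν {x | N x ≤ r} ^ (s / p') ≤ B ^ s * μ (Ici r) ^ (-(s / q)) := by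
  rw [ENNReal.rpow_neg, ← div_eq_mul_inv, ENNReal.le_div_iff_mul_le, mul_comm]
  · exact h.rpow_mul_rpow_le hs r
  · exact .inl (ENNReal.rpow_pos hr.bot_lt hr').ne'
  · exact .inl (by simp [ENNReal.rpow_eq_top_iff, hr, hr'])

variable [TopologicalSpace α] [OrderTopology α] [SecondCountableTopology α] [BorelSpace α]

lemma sigmaFinite_restrict_preimage_Ici_ne_zero (h : IsMuckenhouptBound ν μ N p' q B)
    (hN : Measurable N) (hp' : 0 < p') (hq : 0 < q) (hB : B ≠ ⊤) :
    SigmaFinite (ν.restrict (N ⁻¹' {r | μ (Ici r) ≠ 0})) :=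
  have hlower := isLowerSet_measure_Ici_ne_zero μ
  sigmaFinite_restrict_preimage hlower (hN hlower.ordConnected.measurableSet)
    fun _ hr ↦ h.measure_sublevel_ne_top hp' hq hB hr

lemma sigmaFinite_restrict_sublevel_ne_zero (h : IsMuckenhouptBound ν μ N p' q B)
    (hp' : 0 < p') (hq : 0 < q) (hB : B ≠ ⊤) :
    SigmaFinite (μ.restrict {r | ν {x | N x ≤ r} ≠ 0}) :=
  have hupper := isUpperSet_measure_sublevel_ne_zero ν N
  sigmaFinite_restrict_preimage (N := OrderDual.toDual) hupper.toDual
    hupper.ordConnected.measurableSet fun _ hr ↦ h.measure_Ici_ne_top hp' hq hB hr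

end IsMuckenhouptBound

variable [TopologicalSpace α] [OrderTopology α] [SecondCountableTopology α] [BorelSpace α]
  {ν : Measure X} {μ : Measure α} {N : X → α} {g : X → ℝ≥0∞} {p p' q s : ℝ} {B : ℝ≥0∞}

/- Hölder's inequality for `g = (g * V ^ (s / p')) * V ^ (-(s / p'))`, where `V x = ν {N ≤ N x}`. -/
lemma setLIntegral_sublevel_le_of_measure_ne_top (hN : Measurable N) (hg : Measurable g)
    (hpp' : p.HolderConjugate p') (hs : 0 < s) (hs1 : s < 1) {r : α}
    (hr : ν {x | N x ≤ r} ≠ ⊤) :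
    ∫⁻ x in {x | N x ≤ r}, g x ∂ν ≤
      (∫⁻ x in {x | N x ≤ r}, g x ^ p * ν {y | N y ≤ N x} ^ (s * p / p') ∂ν) ^ (1 / p) *
        (ENNReal.ofReal (1 - s)⁻¹ * ν {x | N x ≤ r} ^ (1 - s)) ^ (1 / p') := by
  have hp' := hpp'.symm.pos
  set V : X → ℝ≥0∞ := fun x ↦ ν {y | N y ≤ N x}
  have hV : Measurable V := (monotone_measure_sublevel ν N).measurable.comp hN
  have hsplit : ∀ᵐ x ∂ν.restrict {x | N x ≤ r},
      g x = g x * V x ^ (s / p') * V x ^ (-(s / p')) := by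
    filter_upwards [ae_restrict_of_ae (ae_measure_sublevel_ne_zero ν N),
      ae_restrict_mem (measurableSet_le hN measurable_const)] with x hx hxr
    have hxtop : V x ≠ ⊤ := ne_top_of_le_ne_top hr (monotone_measure_sublevel ν N hxr)
    rw [mul_assoc, ← ENNReal.rpow_add _ _ hx hxtop, add_neg_cancel, ENNReal.rpow_zero, mul_one]
  rw [lintegral_congr_ae hsplit]
  refine (ENNReal.lintegral_mul_le_Lp_mul_Lq _ hpp' (hg.mul (hV.pow_const _)).aemeasurable
    (hV.pow_const _).aemeasurable).trans (mul_le_mul' (le_of_eq ?_) ?_)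
  · simp only [Pi.mul_apply, ENNReal.mul_rpow_of_nonneg _ _ hpp'.nonneg, ← ENNReal.rpow_mul,
      div_mul_eq_mul_div, V]
  · gcongr
    simpa only [← ENNReal.rpow_mul, ← neg_mul, neg_div', div_mul_cancel₀ _ hp'.ne'] using
      setLIntegral_measure_sublevel_rpow_neg_le ν hN hs hs1 r

lemma setLIntegral_sublevel_le_rpow_measure_Ici (hN : Measurable N) (hg : Measurable g)
    (hpp' : p.HolderConjugate p') (hq : 0 < q) (hs : 0 < s) (hs1 : s < 1)
    (hB : IsMuckenhouptBound ν μ N p' q B) (hBtop : B ≠ ⊤) {r : α} (hr : μ (Ici r) ≠ 0) :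
    ∫⁻ x in {x | N x ≤ r}, g x ∂ν ≤
      ENNReal.ofReal (1 - s)⁻¹ ^ (1 / p') * B ^ (1 - s) * (μ (Ici r) ^ (-((1 - s) / q)) *
        (∫⁻ x in {x | N x ≤ r}, g x ^ p * ν {y | N y ≤ N x} ^ (s * p / p') ∂ν) ^ (1 / p)) := by
  have hp' := hpp'.symm.pos
  rcases eq_or_ne (ν {x | N x ≤ r}) 0 with hzero | hpos
  · simp [setLIntegral_measure_zero _ _ hzero]
  have hVtop := hB.measure_sublevel_ne_top hp' hq hBtop hr
  have hUtop := hB.measure_Ici_ne_top hp' hq hBtop hpos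
  have hVU := hB.rpow_measure_sublevel_le (sub_nonneg.2 hs1.le) hr hUtop
  refine (setLIntegral_sublevel_le_of_measure_ne_top hN hg hpp' hs hs1 hVtop).trans ?_
  rw [ENNReal.mul_rpow_of_nonneg _ _ (by positivity), ← ENNReal.rpow_mul, mul_one_div]
  refine (mul_le_mul' le_rfl (mul_le_mul' le_rfl hVU)).trans (le_of_eq ?_)
  ring

lemma lintegral_mul_withDensity_Ici_rpow_le (hg : Measurable g)
    (hp : 0 < p) (hq : 0 < q) (hs : 0 < s) (hs1 : s < 1) (hB : IsMuckenhouptBound ν μ N p' q B) :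
    ∫⁻ x, g x ^ p * ν {y | N y ≤ N x} ^ (s * p / p') *
        μ.withDensity (fun r ↦ μ (Ici r) ^ (-(1 - s))) (Ici (N x)) ^ (p / q) ∂ν ≤
      ENNReal.ofReal s⁻¹ ^ (p / q) * B ^ (s * p) * ∫⁻ x, g x ^ p ∂ν := by
  have hdens (t : α) : μ.withDensity (fun r ↦ μ (Ici r) ^ (-(1 - s))) (Ici t) ≤
      ENNReal.ofReal s⁻¹ * μ (Ici t) ^ s := by
    simpa [withDensity_apply _ measurableSet_Ici] using
      setLIntegral_measure_Ici_rpow_neg_le μ (sub_pos.2 hs1) (sub_lt_self 1 hs) t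
  rw [← lintegral_const_mul _ (hg.pow_const p)]
  refine lintegral_mono fun x ↦ ?_
  calc g x ^ p * ν {y | N y ≤ N x} ^ (s * p / p') * _ ^ (p / q)
      ≤ g x ^ p * ν {y | N y ≤ N x} ^ (s * p / p') *
          (ENNReal.ofReal s⁻¹ * μ (Ici (N x)) ^ s) ^ (p / q) := by gcongr; exact hdens _
    _ = ENNReal.ofReal s⁻¹ ^ (p / q) *
          (μ (Ici (N x)) ^ (s * p / q) * ν {y | N y ≤ N x} ^ (s * p / p')) * g x ^ p := by
        rw [ENNReal.mul_rpow_of_nonneg _ _ (by positivity), ← ENNReal.rpow_mul, mul_div_assoc s p q]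
        ring
    _ ≤ ENNReal.ofReal s⁻¹ ^ (p / q) * B ^ (s * p) * g x ^ p := by
        gcongr
        exact hB.rpow_mul_rpow_le (by positivity) (N x)

lemma rpow_lintegral_mul_rpow_setLIntegral_sublevel_le [SFinite ν] [SFinite μ]
    (hN : Measurable N) (hg : Measurable g) (hp : 0 < p) (hpq : p ≤ q) (hs : 0 < s) (hs1 : s < 1)
    (hB : IsMuckenhouptBound ν μ N p' q B) :
    (∫⁻ r, μ (Ici r) ^ (-(1 - s)) *
        (∫⁻ x in {x | N x ≤ r}, g x ^ p * ν {y | N y ≤ N x} ^ (s * p / p') ∂ν) ^ (q / p) ∂μ) ^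
          (p / q) ≤
      ENNReal.ofReal s⁻¹ ^ (p / q) * B ^ (s * p) * ∫⁻ x, g x ^ p ∂ν := by
  set w : X → ℝ≥0∞ := fun x ↦ g x ^ p * ν {y | N y ≤ N x} ^ (s * p / p')
  set u : α → ℝ≥0∞ := fun r ↦ μ (Ici r) ^ (-(1 - s))
  have hw : Measurable w := (hg.pow_const _).mul
    (((monotone_measure_sublevel ν N).measurable.comp hN).pow_const _)
  have hu : Measurable u := (antitone_measure_Ici μ).measurable.pow_const _
  have hminkowski := lintegral_rpow_setLIntegral_sublevel_le ν (μ.withDensity u) hN hw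
    ((one_le_div hp).2 hpq)
  rw [lintegral_withDensity_eq_lintegral_mul _ hu
    ((monotone_setLIntegral_sublevel ν N w).measurable.pow_const _), one_div_div] at hminkowski
  exact hminkowski.trans (lintegral_mul_withDensity_Ici_rpow_le hg hp (hp.trans_le hpq) hs hs1 hB)

lemma lintegral_rpow_setLIntegral_sublevel_le_mul_lintegral (hN : Measurable N)
    (hg : Measurable g) (hpp' : p.HolderConjugate p') (hq : 0 < q) (hs : 0 < s) (hs1 : s < 1)
    (hB : IsMuckenhouptBound ν μ N p' q B) (hBtop : B ≠ ⊤) :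
    ∫⁻ r, (∫⁻ x in {x | N x ≤ r}, g x ∂ν) ^ q ∂μ ≤
      (ENNReal.ofReal (1 - s)⁻¹ ^ (1 / p') * B ^ (1 - s)) ^ q *
        ∫⁻ r, μ (Ici r) ^ (-(1 - s)) *
          (∫⁻ x in {x | N x ≤ r}, g x ^ p * ν {y | N y ≤ N x} ^ (s * p / p') ∂ν) ^ (q / p) ∂μ := by
  have hmeas : Measurable fun r ↦ μ (Ici r) ^ (-(1 - s)) *
      (∫⁻ x in {x | N x ≤ r}, g x ^ p * ν {y | N y ≤ N x} ^ (s * p / p') ∂ν) ^ (q / p) :=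
    ((antitone_measure_Ici μ).measurable.pow_const _).mul
      ((monotone_setLIntegral_sublevel ν N _).measurable.pow_const _)
  rw [← lintegral_const_mul _ hmeas]
  refine lintegral_mono_ae ?_
  filter_upwards [ae_measure_Ici_ne_zero μ] with r hr
  have hpow := ENNReal.rpow_le_rpow
    (setLIntegral_sublevel_le_rpow_measure_Ici hN hg hpp' hq hs hs1 hB hBtop hr) hq.le
  rwa [ENNReal.mul_rpow_of_nonneg _ _ hq.le, ENNReal.mul_rpow_of_nonneg (_ ^ (-_)) _ hq.le,
    ← ENNReal.rpow_mul (μ _), ← ENNReal.rpow_mul (lintegral _ _), ← neg_div,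
    div_mul_cancel₀ _ hq.ne', one_div_mul_eq_div] at hpow

lemma hardy_inequality_of_sfinite [SFinite ν] [SFinite μ] (hN : Measurable N) (hg : Measurable g)
    (hpp' : p.HolderConjugate p') (hpq : p ≤ q) (hs : 0 < s) (hs1 : s < 1)
    (hB : IsMuckenhouptBound ν μ N p' q B) (hBtop : B ≠ ⊤) :
    (∫⁻ r, (∫⁻ x in {x | N x ≤ r}, g x ∂ν) ^ q ∂μ) ^ (1 / q) ≤
      ENNReal.ofReal (1 - s)⁻¹ ^ (1 / p') * ENNReal.ofReal s⁻¹ ^ (1 / q) * B *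
        (∫⁻ x, g x ^ p ∂ν) ^ (1 / p) := by
  have hp : 0 < p := hpp'.pos
  have hq : 0 < q := hp.trans_le hpq
  set J := ∫⁻ r, μ (Ici r) ^ (-(1 - s)) *
    (∫⁻ x in {x | N x ≤ r}, g x ^ p * ν {y | N y ≤ N x} ^ (s * p / p') ∂ν) ^ (q / p) ∂μ
  set C := ENNReal.ofReal (1 - s)⁻¹ ^ (1 / p') * B ^ (1 - s)
  have hpointwise : ∫⁻ r, (∫⁻ x in {x | N x ≤ r}, g x ∂ν) ^ q ∂μ ≤ C ^ q * J :=
    lintegral_rpow_setLIntegral_sublevel_le_mul_lintegral hN hg hpp' hq hs hs1 hB hBtop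
  have hminkowski :
      J ^ (p / q) ≤ ENNReal.ofReal s⁻¹ ^ (p / q) * B ^ (s * p) * ∫⁻ x, g x ^ p ∂ν :=
    rpow_lintegral_mul_rpow_setLIntegral_sublevel_le hN hg hp hpq hs hs1 hB
  calc (∫⁻ r, (∫⁻ x in {x | N x ≤ r}, g x ∂ν) ^ q ∂μ) ^ (1 / q)
      ≤ (C ^ q * J) ^ (1 / q) := by gcongr
    _ = C * (J ^ (p / q)) ^ (1 / p) := by
        rw [ENNReal.mul_rpow_of_nonneg _ _ (by positivity), ← ENNReal.rpow_mul,
          ← ENNReal.rpow_mul, mul_one_div_cancel hq.ne', ENNReal.rpow_one,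
          div_mul_div_cancel₀' hp.ne']
    _ ≤ C * (ENNReal.ofReal s⁻¹ ^ (p / q) * B ^ (s * p) * ∫⁻ x, g x ^ p ∂ν) ^ (1 / p) := by
        gcongr
    _ = ENNReal.ofReal (1 - s)⁻¹ ^ (1 / p') * ENNReal.ofReal s⁻¹ ^ (1 / q) *
          (B ^ (1 - s) * B ^ s) * (∫⁻ x, g x ^ p ∂ν) ^ (1 / p) := by
        rw [ENNReal.mul_rpow_of_nonneg _ _ (by positivity),
          ENNReal.mul_rpow_of_nonneg _ _ (by positivity), ← ENNReal.rpow_mul,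
          ← ENNReal.rpow_mul, div_mul_div_cancel₀' hp.ne', mul_assoc s, mul_one_div_cancel hp.ne',
          mul_one]
        ring
    _ = _ := by
        rw [← ENNReal.rpow_add_of_nonneg _ _ (sub_nonneg.2 hs1.le) hs.le, sub_add_cancel,
          ENNReal.rpow_one]

/- Since `B` is finite, `ν {N ≤ r}` is finite when `μ (Ici r) ≠ 0`, and `μ (Ici r)` is finite when
`ν {N ≤ r} ≠ 0`. So both measures are `σ`-finite away from sets that do not affect the left-hand
side. -/
theorem hardy_inequality (hN : Measurable N) (hg : Measurable g)
    (hpp' : p.HolderConjugate p') (hpq : p ≤ q) (hs : 0 < s) (hs1 : s < 1)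
    (hB : IsMuckenhouptBound ν μ N p' q B) (hBtop : B ≠ ⊤) :
    (∫⁻ r, (∫⁻ x in {x | N x ≤ r}, g x ∂ν) ^ q ∂μ) ^ (1 / q) ≤
      ENNReal.ofReal (1 - s)⁻¹ ^ (1 / p') * ENNReal.ofReal s⁻¹ ^ (1 / q) * B *
        (∫⁻ x, g x ^ p ∂ν) ^ (1 / p) := by
  have hp' : 0 < p' := hpp'.symm.pos
  have hq : 0 < q := hpp'.pos.trans_le hpq
  set D : Set α := {r | μ (Ici r) ≠ 0}
  set E : Set α := {r | ν {x | N x ≤ r} ≠ 0}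
  have hν : SigmaFinite (ν.restrict (N ⁻¹' D)) :=
    hB.sigmaFinite_restrict_preimage_Ici_ne_zero hN hp' hq hBtop
  have hμ : SigmaFinite (μ.restrict E) := hB.sigmaFinite_restrict_sublevel_ne_zero hp' hq hBtop
  have hinner {r : α} (hr : r ∈ D) :
      (ν.restrict (N ⁻¹' D)).restrict {x | N x ≤ r} = ν.restrict {x | N x ≤ r} := by
    have hsub : {x | N x ≤ r} ⊆ N ⁻¹' D := fun x hx ↦
      isLowerSet_measure_Ici_ne_zero μ hx hr
    rw [Measure.restrict_restrict (measurableSet_le hN measurable_const),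
      inter_eq_self_of_subset_left hsub]
  calc (∫⁻ r, (∫⁻ x in {x | N x ≤ r}, g x ∂ν) ^ q ∂μ) ^ (1 / q)
      = (∫⁻ r in E, (∫⁻ x in {x | N x ≤ r}, g x ∂ν) ^ q ∂μ) ^ (1 / q) := by
        rw [setLIntegral_eq_of_support_subset]
        intro r hr hzero
        exact hr (by simp [setLIntegral_measure_zero _ _ hzero, hq])
    _ = (∫⁻ r in E, (∫⁻ x in {x | N x ≤ r}, g x ∂ν.restrict (N ⁻¹' D)) ^ q ∂μ) ^ (1 / q) := by
        congr 1
        refine lintegral_congr_ae ?_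
        filter_upwards [ae_restrict_of_ae (ae_measure_Ici_ne_zero μ)] with r hr
        rw [hinner hr]
    _ ≤ ENNReal.ofReal (1 - s)⁻¹ ^ (1 / p') * ENNReal.ofReal s⁻¹ ^ (1 / q) * B *
          (∫⁻ x in N ⁻¹' D, g x ^ p ∂ν) ^ (1 / p) :=
        hardy_inequality_of_sfinite hN hg hpp' hpq hs hs1 (hB.restrict hp' hq _ _) hBtop
    _ ≤ _ := by
        gcongr
        · exact one_div_nonneg.2 hpp'.nonneg
        · exact Measure.restrict_le_self

end Hardy

section ChangeOfWeight

variable {X : Type*} [MeasurableSpace X] {μ : Measure X} {ψ : X → ℝ≥0} {f : X → ℝ≥0∞} {κ : ℝ}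

lemma setLIntegral_mul_rpow_withDensity_rpow_neg (hψ : Measurable ψ) (hf : Measurable f)
    (hκ : 0 < κ) {S : Set X} (hS : MeasurableSet S)
    (hfin : ∫⁻ x in S, (ψ x : ℝ≥0∞) ^ (-κ) ∂μ ≠ ⊤) :
    ∫⁻ x in S, f x * (ψ x : ℝ≥0∞) ^ κ ∂μ.withDensity (fun x ↦ (ψ x : ℝ≥0∞) ^ (-κ)) =
      ∫⁻ x in S, f x ∂μ := by
  have hpow (e : ℝ) : Measurable fun x ↦ (ψ x : ℝ≥0∞) ^ e := hψ.coe_nnreal_ennreal.pow_const e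
  have hfψ : Measurable fun x ↦ f x * (ψ x : ℝ≥0∞) ^ κ := hf.mul (hpow κ)
  rw [restrict_withDensity hS, lintegral_withDensity_eq_lintegral_mul _ (hpow (-κ)) hfψ]
  refine lintegral_congr_ae ?_
  filter_upwards [ae_lt_top (hpow (-κ)) hfin] with x hx
  have hψx : (ψ x : ℝ≥0∞) ≠ 0 := by
    intro hzero
    simp [hzero, ENNReal.zero_rpow_of_neg (neg_lt_zero.2 hκ)] at hx
  rw [Pi.mul_apply, mul_left_comm, ← ENNReal.rpow_add _ _ hψx coe_ne_top,
    neg_add_cancel, ENNReal.rpow_zero, mul_one]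

lemma lintegral_mul_rpow_rpow_withDensity_rpow_neg_le {p : ℝ} (hψ : Measurable ψ)
    (hf : Measurable f) (hκ : 0 < κ) (hκp : -κ + κ * p = 1) :
    ∫⁻ x, (f x * (ψ x : ℝ≥0∞) ^ κ) ^ p ∂μ.withDensity (fun x ↦ (ψ x : ℝ≥0∞) ^ (-κ)) ≤
      ∫⁻ x, f x ^ p ∂μ.withDensity (fun x ↦ (ψ x : ℝ≥0∞)) := by
  have hpow (e : ℝ) : Measurable fun x ↦ (ψ x : ℝ≥0∞) ^ e := hψ.coe_nnreal_ennreal.pow_const e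
  have hfψ : Measurable fun x ↦ f x * (ψ x : ℝ≥0∞) ^ κ := hf.mul (hpow κ)
  have hκp_pos : 0 < κ * p := by linarith
  have hp : 0 < p := (mul_pos_iff_of_pos_left hκ).1 hκp_pos
  rw [lintegral_withDensity_eq_lintegral_mul _ (hpow (-κ)) (hfψ.pow_const p),
    lintegral_withDensity_eq_lintegral_mul _ hψ.coe_nnreal_ennreal (hf.pow_const p)]
  refine lintegral_mono fun x ↦ ?_
  simp only [Pi.mul_apply, ENNReal.mul_rpow_of_nonneg _ _ hp.le, ← ENNReal.rpow_mul]
  rcases eq_or_ne (ψ x : ℝ≥0∞) 0 with hzero | hne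
  · simp [hzero, hκp_pos]
  · rw [mul_left_comm, ← ENNReal.rpow_add _ _ hne coe_ne_top, hκp, ENNReal.rpow_one, mul_comm]

end ChangeOfWeight

section WeightedHardy

variable {X α : Type*} [MeasurableSpace X] [LinearOrder α] [TopologicalSpace α] [OrderTopology α]
  [SecondCountableTopology α] [MeasurableSpace α] [BorelSpace α]

lemma weighted_hardy_inequality {μ₁ μ₃ : Measure X} {μ₂ : Measure α} {ψ : X → ℝ≥0}
    (hψ : Measurable ψ) (hψμ : μ₁.withDensity (fun x ↦ (ψ x : ℝ≥0∞)) ≤ μ₃) {N : X → α}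
    (hN : Measurable N) {p p' q s : ℝ} (hpp' : p.HolderConjugate p') (hpq : p ≤ q) (hs : 0 < s)
    (hs1 : s < 1) {B : ℝ≥0∞}
    (hB : IsMuckenhouptBound (μ₁.withDensity fun x ↦ (ψ x : ℝ≥0∞) ^ (-(p' / p))) μ₂ N p' q B)
    (hBtop : B ≠ ⊤) {f : X → ℝ≥0∞} (hf : Measurable f) :
    (∫⁻ r, (∫⁻ x in {x | N x ≤ r}, f x ∂μ₁) ^ q ∂μ₂) ^ (1 / q) ≤
      ENNReal.ofReal ((1 - s)⁻¹ ^ (1 / p') * s⁻¹ ^ (1 / q)) * B *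
        (∫⁻ x, f x ^ p ∂μ₃) ^ (1 / p) := by
  have hp : 0 < p := hpp'.pos
  have hp' : 0 < p' := hpp'.symm.pos
  have hq : 0 < q := hp.trans_le hpq
  have hκ : 0 < p' / p := by positivity
  have hκp : -(p' / p) + p' / p * p = 1 := by
    have := hpp'.sub_one_mul_conj
    field_simp
    linarith
  set ν := μ₁.withDensity fun x ↦ (ψ x : ℝ≥0∞) ^ (-(p' / p))
  set g : X → ℝ≥0∞ := fun x ↦ f x * (ψ x : ℝ≥0∞) ^ (p' / p)
  have hg : Measurable g := hf.mul (hψ.coe_nnreal_ennreal.pow_const _)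
  have hinner : ∀ᵐ r ∂μ₂, ∫⁻ x in {x | N x ≤ r}, f x ∂μ₁ = ∫⁻ x in {x | N x ≤ r}, g x ∂ν := by
    filter_upwards [ae_measure_Ici_ne_zero μ₂] with r hr
    have hS : MeasurableSet {x | N x ≤ r} := measurableSet_le hN measurable_const
    have hfin := hB.measure_sublevel_ne_top hp' hq hBtop hr
    rw [withDensity_apply _ hS] at hfin
    exact (setLIntegral_mul_rpow_withDensity_rpow_neg hψ hf hκ hS hfin).symm
  have hnorm : ∫⁻ x, g x ^ p ∂ν ≤ ∫⁻ x, f x ^ p ∂μ₃ :=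
    (lintegral_mul_rpow_rpow_withDensity_rpow_neg_le hψ hf hκ hκp).trans
      (lintegral_mono' hψμ le_rfl)
  have hs1' : 0 < 1 - s := sub_pos.2 hs1
  rw [lintegral_congr_ae (hinner.mono fun r hr ↦ congrArg (· ^ q) hr),
    ENNReal.ofReal_mul (by positivity), ← ENNReal.ofReal_rpow_of_pos (inv_pos.2 hs1'),
    ← ENNReal.ofReal_rpow_of_pos (inv_pos.2 hs)]
  exact (hardy_inequality hN hg hpp' hpq hs hs1 hB hBtop).trans (by gcongr)

theorem general_hardy_inequality_le_general
    (μ₁ μ₃ : Measure X) (μ₂ : Measure α)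
    (ψ : X → ℝ≥0) (hψ : Measurable ψ)
    (hψμ : μ₁.withDensity (fun x ↦ (ψ x : ℝ≥0∞)) ≤ μ₃)
    (N : X → α) (hN : Measurable N)
    (p q p' q' : ℝ) (hp : 1 < p) (hpq : p ≤ q)
    (hp' : p' = p / (p - 1)) (hq' : q' = q / (q - 1))
    (B' : ℝ≥0∞)
    (hB' : B' = ⨆ r : α, μ₂ (Ici r) ^ (1 / q) *
      (∫⁻ x in {x | N x ≤ r}, (ψ x : ℝ≥0∞) ^ (-(p' / p)) ∂μ₁) ^ (1 / p'))
    (hB'fin : B' ≠ ⊤) (f : X → ℝ≥0∞) (hf : Measurable f) :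
    (∫⁻ r, (∫⁻ x in {x | N x ≤ r}, f x ∂μ₁) ^ q ∂μ₂) ^ (1 / q) ≤
      ENNReal.ofReal (min (p' ^ (1 / p') * p ^ (1 / q)) (q' ^ (1 / p') * q ^ (1 / q))) *
        B' * (∫⁻ x, f x ^ p ∂μ₃) ^ (1 / p) := by
  have hq : 1 < q := hp.trans_le hpq
  have hpp' : p.HolderConjugate p' := (Real.holderConjugate_iff_eq_conjExponent hp).2 hp'
  have hqq' : q.HolderConjugate q' := (Real.holderConjugate_iff_eq_conjExponent hq).2 hq'
  have hmuck : IsMuckenhouptBound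
      (μ₁.withDensity fun x ↦ (ψ x : ℝ≥0∞) ^ (-(p' / p))) μ₂ N p' q B' := fun r ↦ by
    rw [withDensity_apply _ (measurableSet_le hN measurable_const), hB']
    exact le_iSup_of_le r le_rfl
  have hardy {t t' : ℝ} (ht : t.HolderConjugate t') :
      (∫⁻ r, (∫⁻ x in {x | N x ≤ r}, f x ∂μ₁) ^ q ∂μ₂) ^ (1 / q) ≤
        ENNReal.ofReal (t' ^ (1 / p') * t ^ (1 / q)) * B' * (∫⁻ x, f x ^ p ∂μ₃) ^ (1 / p) := by
    simpa only [ht.one_sub_inv, inv_inv] using weighted_hardy_inequality hψ hψμ hN hpp' hpq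
      (inv_pos.2 ht.pos) (inv_lt_one_of_one_lt₀ ht.lt) hmuck hB'fin hf
  rcases min_choice (p' ^ (1 / p') * p ^ (1 / q)) (q' ^ (1 / p') * q ^ (1 / q)) with h | h <;>
    rw [h]
  · exact hardy hpp'
  · exact hardy hqq'

end WeightedHardy

/-- General Hardy inequality (Theorem 2, sufficiency, with non-strict sublevel sets). -/
theorem general_hardy_inequality_le
    {X : Type*} [MeasurableSpace X]
    (μ₁ μ₃ : Measure X) (μ₂ : Measure ℝ)
    (ψ : X → ℝ≥0) (hψ : Measurable ψ)
    (hψμ : μ₁.withDensity (fun x => (ψ x : ℝ≥0∞)) ≤ μ₃)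
    (N : X → ℝ) (hN : Measurable N)
    (p q p' q' : ℝ) (hp : 1 < p) (hpq : p ≤ q)
    (hp' : p' = p / (p - 1)) (hq' : q' = q / (q - 1))
    (B' : ℝ≥0∞)
    (hB' : B' = ⨆ r : ℝ, μ₂ (Set.Ici r) ^ (1 / q) *
      (∫⁻ x in {x | N x ≤ r}, ((ψ x : ℝ≥0∞)) ^ (-(p' / p)) ∂μ₁) ^ (1 / p'))
    (hB'fin : B' ≠ ⊤) :
    ∀ f : X → ℝ≥0∞, Measurable f →
      (∫⁻ r, (∫⁻ x in {x | N x ≤ r}, f x ∂μ₁) ^ q ∂μ₂) ^ (1 / q) ≤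
        ENNReal.ofReal (min (p' ^ (1 / p') * p ^ (1 / q)) (q' ^ (1 / p') * q ^ (1 / q))) *
          B' * (∫⁻ x, f x ^ p ∂μ₃) ^ (1 / p) := by
  exact general_hardy_inequality_le_general μ₁ μ₃ μ₂ ψ hψ hψμ N hN p q p' q' hp hpq hp' hq' B'
    hB' hB'fin
end

section
/- Let (X, M) be a measurable space, μ₁ a semi-finite positive measure on (X, M), μ₂ a positive Borel measure on ℝ, and μ₃ a positive measure on (X, M) whose absolutely continuous part with respect to μ₁ has a density ψ : X → [0,∞) with respect to μ₁. Let N : X → ℝ be M-measurable and let 1 < p ≤ q < ∞, with p' = p/(p−1). If C' ≥ 0 is a constant such that (∫_ℝ (∫_{{x : N(x)≤r}} f(x) dμ₁(x))^q dμ₂(r))^{1/q} ≤ C' (∫_X f(x)^p dμ₃(x))^{1/p} for every M-measurable function f : X → [0,+∞], then sup_{r∈ℝ} μ₂([r,+∞))^{1/q} (∫_{{x : N(x)≤r}} ψ(x)^{−p'/p} dμ₁(x))^{1/p'} ≤ C'. -/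
open MeasureTheory ENNReal
open scoped NNReal

/-!
Write `w = ψ ^ (-(p' / p))`, so that `ψ w ^ p = w`. Were the integral `I` of `w` over `{N ≤ r}`
finite, testing the Hardy inequality on `w` restricted to `{N ≤ r}` would give
`μ₂ [r, ∞) ^ (1 / q) * I ≤ C * I ^ (1 / p)`, and dividing by `I ^ (1 / p)` would finish the proof.
The singular part of `μ₃` is harmless because the test function may be set to zero on a `μ₁`-null
set carrying it. As `I` may be infinite, `w` is replaced by a minorant `g` with finite integral, for
which `ψ g ^ p ≤ g` still holds; semi-finiteness of `μ₁` makes the integrals of such minorants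
exhaust `I`.
-/

section ConjugateExponents

variable {a b c x y : ℝ≥0∞} {p p' : ℝ}

theorem mul_rpow_le_self_of_le_rpow_neg (hp : p.HolderConjugate p')
    (hxy : x ≤ y ^ (-(p' / p))) : y * x ^ p ≤ x := by
  have hx : x ^ (p - 1) ≤ y⁻¹ := by
    have hexp : -(p' / p) * (p - 1) = -1 := by
      rw [hp.symm.div_conj_eq_sub_one]
      linear_combination -hp.mul_eq_add
    calc x ^ (p - 1) ≤ (y ^ (-(p' / p))) ^ (p - 1) :=
          ENNReal.rpow_le_rpow hxy hp.sub_one_pos.le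
      _ = y⁻¹ := by rw [← ENNReal.rpow_mul, hexp, ENNReal.rpow_neg_one]
  calc y * x ^ p = y * x ^ (p - 1) * x := by
        conv_lhs => rw [← sub_add_cancel p 1]
        rw [ENNReal.rpow_add_of_nonneg _ _ hp.sub_one_pos.le zero_le_one, ENNReal.rpow_one,
          mul_assoc]
    _ ≤ y * y⁻¹ * x := by gcongr
    _ ≤ x := mul_le_of_le_one_left' (ENNReal.mul_inv_le_one y)

theorem mul_rpow_one_div_le_of_mul_le_mul_rpow (hp : p.HolderConjugate p') (hb : b ≠ ⊤)
    (h : a * b ≤ c * b ^ (1 / p)) : a * b ^ (1 / p') ≤ c := by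
  rcases eq_or_ne b 0 with rfl | hb₀
  · rw [ENNReal.zero_rpow_of_pos hp.symm.one_div_pos, mul_zero]
    exact zero_le
  have hsplit : b ^ (1 / p') * b ^ (1 / p) = b := by
    rw [← ENNReal.rpow_add _ _ hb₀ hb, hp.symm.one_div_add_one_div, one_div_one, ENNReal.rpow_one]
  have hpow₀ : b ^ (1 / p) ≠ 0 := (ENNReal.rpow_pos hb₀.bot_lt hb).ne'
  have hpow_top : b ^ (1 / p) ≠ ⊤ := ENNReal.rpow_ne_top_of_nonneg hp.one_div_nonneg hb
  rwa [← ENNReal.mul_le_mul_iff_left hpow₀ hpow_top, mul_assoc, hsplit]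

end ConjugateExponents

section MonotoneFunctions

variable {ι : Type*} [Preorder ι] [TopologicalSpace ι] [ClosedIciTopology ι] [MeasurableSpace ι]
  [OpensMeasurableSpace ι] {F : ι → ℝ≥0∞}

theorem measure_Ici_mul_le_lintegral_of_monotone (κ : Measure ι) (hF : Monotone F) (r : ι) :
    κ (Set.Ici r) * F r ≤ ∫⁻ s, F s ∂κ :=
  calc κ (Set.Ici r) * F r = ∫⁻ _ in Set.Ici r, F r ∂κ := by rw [setLIntegral_const, mul_comm]
    _ ≤ ∫⁻ s in Set.Ici r, F s ∂κ := setLIntegral_mono' measurableSet_Ici fun _ hs ↦ hF hs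
    _ ≤ ∫⁻ s, F s ∂κ := setLIntegral_le_lintegral _ _

theorem measure_Ici_rpow_mul_le_lintegral_rpow_of_monotone (κ : Measure ι) (hF : Monotone F)
    {q : ℝ} (hq : 0 < q) (r : ι) :
    κ (Set.Ici r) ^ (1 / q) * F r ≤ (∫⁻ s, F s ^ q ∂κ) ^ (1 / q) := by
  have hmarkov := measure_Ici_mul_le_lintegral_of_monotone κ
    ((ENNReal.monotone_rpow_of_nonneg hq.le).comp hF) r
  calc κ (Set.Ici r) ^ (1 / q) * F r = (κ (Set.Ici r) * F r ^ q) ^ (1 / q) := by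
        rw [ENNReal.mul_rpow_of_nonneg _ _ (by positivity), ← ENNReal.rpow_mul,
          mul_one_div_cancel hq.ne', ENNReal.rpow_one]
    _ ≤ (∫⁻ s, F s ^ q ∂κ) ^ (1 / q) := ENNReal.rpow_le_rpow hmarkov (by positivity)

end MonotoneFunctions

section WeightedHardy

variable {X : Type*} [MeasurableSpace X] {μ ν σ : Measure X}

theorem exists_seq_measure_iUnion_eq_iSup {𝒞 : Set (Set X)} (μ : Measure X) (hne : 𝒞.Nonempty)
    (hunion : SupClosed 𝒞) :
    ∃ F : ℕ → Set X, (∀ n, F n ∈ 𝒞) ∧ μ (⋃ n, F n) = ⨆ s ∈ 𝒞, μ s := by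
  obtain ⟨u, -, hu_tendsto, hu_mem⟩ :=
    exists_seq_tendsto_sSup (hne.image μ) (OrderTop.bddAbove _)
  choose F hF𝒞 hFu using hu_mem
  refine ⟨F, hF𝒞, le_antisymm ?_ ?_⟩
  · have hpartial (n : ℕ) : partialSups F n ∈ 𝒞 := by
      rw [partialSups_apply]
      exact hunion.finsetSup'_mem _ fun i _ ↦ hF𝒞 i
    rw [← Set.iSup_eq_iUnion, ← iSup_partialSups_eq, Set.iSup_eq_iUnion,
      (partialSups F).monotone.measure_iUnion]
    exact iSup_le fun n ↦ le_iSup₂_of_le _ (hpartial n) le_rfl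
  · rw [← sSup_image]
    exact le_of_tendsto' hu_tendsto fun n ↦ hFu n ▸ measure_mono (Set.subset_iUnion F n)

/-- Semi-finiteness of a measure: every measurable set of infinite measure has a measurable subset
of positive finite measure. -/
def IsSemifinite (μ : Measure X) : Prop :=
  ∀ E, MeasurableSet E → μ E = ⊤ → ∃ F ⊆ E, MeasurableSet F ∧ 0 < μ F ∧ μ F < ⊤

namespace IsSemifinite

theorem iSup_measure_eq_top (hμ : IsSemifinite μ) {E : Set X} (hE : MeasurableSet E)
    (hE_top : μ E = ⊤) : ⨆ F ∈ {F | F ⊆ E ∧ MeasurableSet F ∧ μ F ≠ ⊤}, μ F = ⊤ := by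
  set 𝒞 := {F | F ⊆ E ∧ MeasurableSet F ∧ μ F ≠ ⊤}
  have hunion : SupClosed 𝒞 := fun s hs t ht ↦
    ⟨Set.union_subset hs.1 ht.1, hs.2.1.union ht.2.1, measure_union_ne_top hs.2.2 ht.2.2⟩
  obtain ⟨F, hF𝒞, hF⟩ := exists_seq_measure_iUnion_eq_iSup μ ⟨∅, by simp [𝒞]⟩ hunion
  set G := ⋃ n, F n
  by_contra hsup
  have hG : G ∈ 𝒞 :=
    ⟨Set.iUnion_subset fun n ↦ (hF𝒞 n).1, .iUnion fun n ↦ (hF𝒞 n).2.1, hF ▸ hsup⟩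
  have hdiff : μ (E \ G) = ⊤ := by
    rw [measure_sdiff hG.1 hG.2.1.nullMeasurableSet hG.2.2, hE_top, ENNReal.top_sub hG.2.2]
  obtain ⟨H, hHE, hHm, hH_pos, hH_top⟩ := hμ _ (hE.diff hG.2.1) hdiff
  have hGH : G ∪ H ∈ 𝒞 := hunion hG ⟨hHE.trans Set.sdiff_subset, hHm, hH_top.ne⟩
  have hle : μ G + μ H ≤ μ G := by
    rw [← measure_union (Set.disjoint_sdiff_right.mono_right hHE) hHm]
    exact hF ▸ le_iSup₂_of_le _ hGH le_rfl
  exact (ENNReal.lt_add_right hG.2.2 hH_pos.ne').not_ge hle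

theorem innerRegularWRT (hμ : IsSemifinite μ) :
    μ.InnerRegularWRT (fun s ↦ MeasurableSet s ∧ μ s ≠ ⊤) MeasurableSet := by
  intro E hE r hr
  by_cases hE_top : μ E = ⊤
  · rw [hE_top, ← hμ.iSup_measure_eq_top hE hE_top] at hr
    obtain ⟨F, ⟨hFE, hF⟩, hrF⟩ := lt_biSup_iff.1 hr
    exact ⟨F, hFE, hF, hrF⟩
  · exact ⟨E, subset_rfl, ⟨hE, hE_top⟩, hr⟩

theorem exists_measurable_le_lt_lintegral (hμ : IsSemifinite μ) {f : X → ℝ≥0∞} {t : ℝ≥0∞}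
    (ht : t < ∫⁻ x, f x ∂μ) :
    ∃ g : X → ℝ≥0∞, Measurable g ∧ g ≤ f ∧ ∫⁻ x, g x ∂μ ≠ ⊤ ∧ t < ∫⁻ x, g x ∂μ := by
  simp_rw [lintegral_eq_nnreal, lt_iSup_iff] at ht
  obtain ⟨φ, hφf, htφ⟩ := ht
  by_cases hφ_top : (φ.map ((↑) : ℝ≥0 → ℝ≥0∞)).lintegral μ = ⊤
  · obtain ⟨y, -, hy⟩ := ENNReal.sum_eq_top.1 ((φ.map_lintegral _).symm.trans hφ_top)
    obtain ⟨hy₀, hlevel⟩ : (y : ℝ≥0∞) ≠ 0 ∧ μ (φ ⁻¹' {y}) = ⊤ := by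
      simpa [ENNReal.mul_eq_top] using hy
    have ht_div : t / y < μ (φ ⁻¹' {y}) :=
      hlevel ▸ ENNReal.div_lt_top (htφ.trans_le le_top).ne hy₀
    obtain ⟨F, hF, ⟨hFm, hF_top⟩, htF⟩ :=
      hμ.innerRegularWRT (φ.measurableSet_preimage _) _ ht_div
    have hint : ∫⁻ x, F.indicator (fun _ ↦ (y : ℝ≥0∞)) x ∂μ = μ F * y := by
      rw [lintegral_indicator_const hFm, mul_comm]
    refine ⟨F.indicator fun _ ↦ y, measurable_const.indicator hFm,
      Set.indicator_le fun x hx ↦ ?_, ?_, ?_⟩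
    · exact (hF hx : φ x = y) ▸ hφf x
    · exact hint ▸ ENNReal.mul_ne_top hF_top ENNReal.coe_ne_top
    · exact hint ▸ (ENNReal.div_lt_iff (.inl hy₀) (.inl ENNReal.coe_ne_top)).1 htF
  · rw [← SimpleFunc.lintegral_eq_lintegral] at htφ hφ_top
    exact ⟨_, SimpleFunc.measurable _, hφf, hφ_top, htφ⟩

theorem lintegral_eq_iSup (hμ : IsSemifinite μ) (f : X → ℝ≥0∞) :
    ∫⁻ x, f x ∂μ = ⨆ (g : X → ℝ≥0∞) (_ : Measurable g) (_ : g ≤ f) (_ : ∫⁻ x, g x ∂μ ≠ ⊤),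
      ∫⁻ x, g x ∂μ := by
  refine le_antisymm (le_of_forall_lt fun t ht ↦ ?_) ?_
  · simpa only [lt_iSup_iff, exists_prop] using hμ.exists_measurable_le_lt_lintegral ht
  · exact iSup₂_le fun g _ ↦ iSup₂_le fun hgf _ ↦ lintegral_mono hgf

end IsSemifinite

theorem exists_measurable_ae_eq_ae_eq_zero (hσ : σ.MutuallySingular μ) {f : X → ℝ≥0∞}
    (hf : Measurable f) : ∃ g : X → ℝ≥0∞, Measurable g ∧ g =ᵐ[μ] f ∧ g =ᵐ[σ] 0 := by
  refine ⟨hσ.nullSet.indicator f, hf.indicator hσ.measurableSet_nullSet, ?_, ?_⟩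
  · exact indicator_ae_eq_of_ae_eq_set (ae_eq_univ.2 hσ.measure_compl_nullSet) |>.trans
      (by simp)
  · exact indicator_meas_zero hσ.measure_nullSet

/-- The weighted Hardy inequality `‖r ↦ ∫_{N ≤ r} f dμ‖_{L^q(κ)} ≤ C ‖f‖_{L^p(ν)}` for all
measurable `f ≥ 0`. Functions and constant are `ℝ≥0∞`-valued, so neither side need be finite. -/
def HardyInequality {ι : Type*} [Preorder ι] [MeasurableSpace ι] (μ ν : Measure X) (κ : Measure ι)
    (N : X → ι) (p q : ℝ) (C : ℝ≥0∞) : Prop :=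
  ∀ f : X → ℝ≥0∞, Measurable f →
    (∫⁻ r, (∫⁻ x in {x | N x ≤ r}, f x ∂μ) ^ q ∂κ) ^ (1 / q) ≤ C * (∫⁻ x, f x ^ p ∂ν) ^ (1 / p)

namespace HardyInequality

variable {ι : Type*} [Preorder ι] [MeasurableSpace ι] {κ : Measure ι} {N : X → ι} {p q p' : ℝ}
  {C : ℝ≥0∞} {ψ : X → ℝ≥0∞}

theorem of_add_mutuallySingular (hardy : HardyInequality μ (ν + σ) κ N p q C) (hν : ν ≪ μ)
    (hσ : σ.MutuallySingular μ) (hp : 0 < p) : HardyInequality μ ν κ N p q C := by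
  intro f hf
  obtain ⟨g, hg, hgf, hg₀⟩ := exists_measurable_ae_eq_ae_eq_zero hσ hf
  have hleft (r : ι) : ∫⁻ x in {x | N x ≤ r}, g x ∂μ = ∫⁻ x in {x | N x ≤ r}, f x ∂μ :=
    lintegral_congr_ae (ae_restrict_of_ae hgf)
  have hright : ∫⁻ x, g x ^ p ∂(ν + σ) = ∫⁻ x, f x ^ p ∂ν := by
    have hσ₀ : ∫⁻ x, g x ^ p ∂σ = 0 := by
      refine lintegral_eq_zero_of_ae_eq_zero (hg₀.mono fun x hx ↦ ?_)
      simp [hx, hp]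
    rw [lintegral_add_measure, hσ₀, add_zero]
    exact lintegral_congr_ae ((hν.ae_eq hgf).fun_comp (· ^ p))
  simpa only [hleft, hright] using hardy g hg

variable [TopologicalSpace ι] [ClosedIciTopology ι] [OpensMeasurableSpace ι]

theorem measure_Ici_rpow_mul_setLIntegral_le (hardy : HardyInequality μ ν κ N p q C) (hq : 0 < q)
    {f : X → ℝ≥0∞} (hf : Measurable f) (r : ι) :
    κ (Set.Ici r) ^ (1 / q) * ∫⁻ x in {x | N x ≤ r}, f x ∂μ ≤ C * (∫⁻ x, f x ^ p ∂ν) ^ (1 / p) :=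
  have hmono : Monotone fun s ↦ ∫⁻ x in {x | N x ≤ s}, f x ∂μ := fun _ _ hst ↦
    lintegral_mono_set fun _ hx ↦ le_trans hx hst
  (measure_Ici_rpow_mul_le_lintegral_rpow_of_monotone κ hmono hq r).trans (hardy f hf)

theorem measure_Ici_rpow_mul_lintegral_rpow_le_of_le
    (hardy : HardyInequality μ (μ.withDensity ψ) κ N p q C) (hψ : Measurable ψ)
    (hp : p.HolderConjugate p') (hq : 0 < q) {r : ι} {g : X → ℝ≥0∞} (hg : Measurable g)
    (hg_le : g ≤ {x | N x ≤ r}.indicator fun x ↦ ψ x ^ (-(p' / p)))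
    (hg_top : ∫⁻ x, g x ∂μ ≠ ⊤) :
    κ (Set.Ici r) ^ (1 / q) * (∫⁻ x, g x ∂μ) ^ (1 / p') ≤ C := by
  have hsupp : Function.support g ⊆ {x | N x ≤ r} := fun x hx ↦
    Set.mem_of_indicator_ne_zero (ne_bot_of_le_ne_bot hx (hg_le x))
  have hweight : ∫⁻ x, g x ^ p ∂μ.withDensity ψ ≤ ∫⁻ x, g x ∂μ := by
    rw [lintegral_withDensity_eq_lintegral_mul _ hψ (hg.pow_const p)]
    exact lintegral_mono fun x ↦ mul_rpow_le_self_of_le_rpow_neg hp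
      ((hg_le x).trans (Set.indicator_le_self _ _ x))
  refine mul_rpow_one_div_le_of_mul_le_mul_rpow hp hg_top ?_
  calc κ (Set.Ici r) ^ (1 / q) * ∫⁻ x, g x ∂μ
      = κ (Set.Ici r) ^ (1 / q) * ∫⁻ x in {x | N x ≤ r}, g x ∂μ := by
        rw [setLIntegral_eq_of_support_subset hsupp]
    _ ≤ C * (∫⁻ x, g x ^ p ∂μ.withDensity ψ) ^ (1 / p) :=
        hardy.measure_Ici_rpow_mul_setLIntegral_le hq hg r
    _ ≤ C * (∫⁻ x, g x ∂μ) ^ (1 / p) := by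
        gcongr
        exact hp.one_div_nonneg

end HardyInequality

theorem general_hardy_inequality_le_necessity_general {ι : Type*} [Preorder ι] [TopologicalSpace ι]
    [OrderClosedTopology ι] [MeasurableSpace ι] [OpensMeasurableSpace ι] {κ : Measure ι}
    {N : X → ι} {p q p' : ℝ} {C : ℝ≥0∞} {ψ : X → ℝ≥0∞} (hμ : IsSemifinite μ) (hψ : Measurable ψ)
    (hσ : σ.MutuallySingular μ) (hN : Measurable N) (hp : p.HolderConjugate p') (hq : 0 < q)
    (hardy : HardyInequality μ (μ.withDensity ψ + σ) κ N p q C) :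
    ⨆ r : ι, κ (Set.Ici r) ^ (1 / q) *
      (∫⁻ x in {x | N x ≤ r}, ψ x ^ (-(p' / p)) ∂μ) ^ (1 / p') ≤ C := by
  have hardy_ac :=
    hardy.of_add_mutuallySingular (withDensity_absolutelyContinuous μ ψ) hσ hp.pos
  refine iSup_le fun r ↦ ?_
  have hsublevel : MeasurableSet {x | N x ≤ r} := hN measurableSet_Iic
  rw [← lintegral_indicator hsublevel, hμ.lintegral_eq_iSup,
    ← ENNReal.orderIsoRpow_apply _ hp.symm.one_div_pos]
  simp only [OrderIso.map_iSup, ENNReal.mul_iSup, iSup_le_iff, ENNReal.orderIsoRpow_apply]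
  exact fun g hg hg_le hg_top ↦
    hardy_ac.measure_Ici_rpow_mul_lintegral_rpow_le_of_le hψ hp hq hg hg_le hg_top

end WeightedHardy

/-- General Hardy inequality (Theorem 2, necessity, with non-strict sublevel sets):
if the Hardy inequality holds with constant `C'`, then `B' ≤ C'`. -/
theorem general_hardy_inequality_le_necessity
    {X : Type*} [MeasurableSpace X]
    (μ₁ μ₃ : Measure X) (μ₂ : Measure ℝ)
    (hsf : ∀ E : Set X, MeasurableSet E → μ₁ E = ⊤ →
      ∃ F, F ⊆ E ∧ MeasurableSet F ∧ 0 < μ₁ F ∧ μ₁ F < ⊤)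
    (ψ : X → ℝ≥0) (hψ : Measurable ψ)
    (σ : Measure X) (hσ : σ.MutuallySingular μ₁)
    (hdec : μ₃ = μ₁.withDensity (fun x => (ψ x : ℝ≥0∞)) + σ)
    (N : X → ℝ) (hN : Measurable N)
    (p q p' : ℝ) (hp : 1 < p) (hpq : p ≤ q)
    (hp' : p' = p / (p - 1))
    (C' : ℝ) (hC' : 0 ≤ C')
    (hineq : ∀ f : X → ℝ≥0∞, Measurable f →
      (∫⁻ r, (∫⁻ x in {x | N x ≤ r}, f x ∂μ₁) ^ q ∂μ₂) ^ (1 / q) ≤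
        ENNReal.ofReal C' * (∫⁻ x, f x ^ p ∂μ₃) ^ (1 / p)) :
    (⨆ r : ℝ, μ₂ (Set.Ici r) ^ (1 / q) *
      (∫⁻ x in {x | N x ≤ r}, ((ψ x : ℝ≥0∞)) ^ (-(p' / p)) ∂μ₁) ^ (1 / p')) ≤
      ENNReal.ofReal C' := by
  subst hdec
  exact general_hardy_inequality_le_necessity_general hsf hψ.coe_nnreal_ennreal hσ hN
    ((Real.holderConjugate_iff_eq_conjExponent hp).2 hp') (by linarith) hineq
end
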